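/- Let k be a field and A = k[x,y]/(xy), and let M = (x,y) ⊆ A be the ideal generated by x and y, viewed as an A-module. Then every A-module automorphism of M is of the form x ↦ λx, y ↦ μy for uniquely determined λ, μ ∈ k^×; in particular the automorphism group of the A-module M is isomorphic to k^× × k^×. -/

import Mathlib

noncomputable section
open MvPolynomial

/-- The algebra `k[x,y]/(xy)`. -/
abbrev Axy (k : Type) [Field k] : Type :=
  MvPolynomial (Fin 2) k ⧸ Ideal.span {(X 0 : MvPolynomial (Fin 2) k) * X 1}

/-- The class of `x` in `k[x,y]/(xy)`. -/
def xbar (k : Type) [Field k] : Axy k := Ideal.Quotient.mk _ (X 0)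

/-- The class of `y` in `k[x,y]/(xy)`. -/
def ybar (k : Type) [Field k] : Axy k := Ideal.Quotient.mk _ (X 1)

/-- The ideal `M = (x, y) ⊆ k[x,y]/(xy)`, viewed as a module over `k[x,y]/(xy)`. -/
abbrev Mxy (k : Type) [Field k] : Ideal (Axy k) := Ideal.span {xbar k, ybar k}

/-- `x` as an element of the module `M = (x,y)`. -/
def xel (k : Type) [Field k] : Mxy k :=
  ⟨xbar k, Ideal.subset_span (Set.mem_insert _ _)⟩

/-- `y` as an element of the module `M = (x,y)`. -/
def yel (k : Type) [Field k] : Mxy k :=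
  ⟨ybar k, Ideal.subset_span (Set.mem_insert_of_mem _ rfl)⟩

/-!
`A = k[x,y]/(xy)` sits inside `B = k[t] × k[t]`, the functions on the two disjoint axes, through
`x ↦ (t, 0)`, `y ↦ (0, t)`. The ideal `M = (x, y)` goes to `sB` with `s = (t, t)` regular, so
`M ≃ B` as `A`-modules. Since `sB ⊆ A`, an `A`-linear endomorphism of `B` becomes `B`-linear after
multiplication by `s`; as `s` is regular it is `B`-linear itself, that is, multiplication by an
element of `B`. Hence `Aut_A M ≃ Bˣ = k[t]ˣ × k[t]ˣ`, and `k[t]ˣ = kˣ` because `k` is reduced.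
-/

open scoped Polynomial

section Conductor

variable {A B M : Type*} [CommSemiring A] [CommSemiring B] [Algebra A B]
  [AddCommMonoid M] [Module A M] {s : B}

theorem linearMap_apply_eq_apply_one_mul (hs : IsLeftRegular s)
    (hsB : ∀ b, s * b ∈ Set.range (algebraMap A B)) (F : B →ₗ[A] B) (b : B) :
    F b = F 1 * b := by
  obtain ⟨c, hc⟩ := hsB 1
  obtain ⟨a, ha⟩ := hsB b
  rw [mul_one] at hc
  apply hs
  calc s * F b = F (c • b) := by rw [map_smul, Algebra.smul_def, hc]
    _ = F (a • 1) := by rw [Algebra.smul_def, Algebra.smul_def, hc, ha, mul_one]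
    _ = s * (F 1 * b) := by rw [map_smul, Algebra.smul_def, ha]; ring

theorem lmul_bijective_of_mul_mem_range (hs : IsLeftRegular s)
    (hsB : ∀ b, s * b ∈ Set.range (algebraMap A B)) :
    Function.Bijective (Algebra.lmul A B) :=
  ⟨Algebra.lmul_injective, fun F ↦
    ⟨F 1, LinearMap.ext fun b ↦ (linearMap_apply_eq_apply_one_mul hs hsB F b).symm⟩⟩

/-- The automorphism group of an `A`-module `M` isomorphic to an `A`-algebra `B`, as the group of
units of `B` acting by multiplication through `e`. The element `s` is a regular element of the
conductor of `A` in `B`. -/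
def unitsEquivAut (hs : IsLeftRegular s) (hsB : ∀ b, s * b ∈ Set.range (algebraMap A B))
    (e : B ≃ₗ[A] M) : Bˣ ≃* (M ≃ₗ[A] M) :=
  let lmulEquiv := AlgEquiv.ofBijective _ (lmul_bijective_of_mul_mem_range hs hsB)
  (Units.mapEquiv (lmulEquiv.toMulEquiv.trans e.conjRingEquiv.toMulEquiv)).trans
    (LinearMap.GeneralLinearGroup.generalLinearEquiv A M)

theorem unitsEquivAut_apply_apply (hs : IsLeftRegular s)
    (hsB : ∀ b, s * b ∈ Set.range (algebraMap A B)) (e : B ≃ₗ[A] M) (u : Bˣ) (b : B) :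
    unitsEquivAut hs hsB e u (e b) = e (u * b) :=
  congrArg (fun c ↦ e (u * c)) (e.symm_apply_apply b)

end Conductor

theorem units_map_polynomialC_bijective (k : Type*) [CommRing k] [IsReduced k] :
    Function.Bijective (Units.map (Polynomial.C : k →+* k[X]).toMonoidHom) := by
  refine ⟨Units.map_injective Polynomial.C_injective, fun u ↦ ?_⟩
  have hdeg : (u : k[X]).natDegree = 0 := Nat.eq_zero_of_not_pos fun h ↦
    Polynomial.not_isUnit_of_natDegree_pos_of_isReduced _ h u.isUnit
  obtain ⟨c, hc⟩ := Polynomial.natDegree_eq_zero.1 hdeg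
  have hunit : IsUnit c := Polynomial.isUnit_C.1 (hc ▸ u.isUnit)
  exact ⟨hunit.unit, Units.ext hc⟩

theorem mul_eq_aeval_mul_of_adjoin_eq_top {k A : Type*} [CommSemiring k] [CommSemiring A]
    [Algebra k A] {x y : A} (hgen : Algebra.adjoin k {x, y} = ⊤) (hxy : x * y = 0)
    {π : A →ₐ[k] k[X]} (hx : π x = Polynomial.X) (hy : π y = 0) (a : A) :
    a * x = Polynomial.aeval x (π a) * x := by
  have ha : a ∈ Algebra.adjoin k {x, y} := hgen ▸ Algebra.mem_top
  induction ha using Algebra.adjoin_induction with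
  | mem z hz =>
    obtain rfl | rfl := hz
    · rw [hx, Polynomial.aeval_X]
    · rw [hy, map_zero, zero_mul, mul_comm, hxy]
  | algebraMap c => rw [AlgHom.commutes, Polynomial.algebraMap_eq, Polynomial.aeval_C]
  | add a b _ _ iha ihb => rw [add_mul, iha, ihb, map_add, map_add, add_mul]
  | mul a b _ _ iha ihb =>
    rw [mul_assoc, ihb, mul_left_comm, iha, map_mul, map_mul, mul_left_comm, mul_assoc]

/-- The ring `k[x,y]/(xy)` over an arbitrary commutative ring `k`; for a field it unfolds to
`Axy k`. -/
def NodeRing (k : Type*) [CommRing k] : Type _ :=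
  MvPolynomial (Fin 2) k ⧸ Ideal.span {(X 0 : MvPolynomial (Fin 2) k) * X 1}

namespace NodeRing

variable (k : Type*) [CommRing k]

instance : CommRing (NodeRing k) := inferInstanceAs (CommRing (MvPolynomial (Fin 2) k ⧸ _))

instance : Algebra k (NodeRing k) := inferInstanceAs (Algebra k (MvPolynomial (Fin 2) k ⧸ _))

/-- The projection `k[x,y] → k[x,y]/(xy)`. -/
def mk : MvPolynomial (Fin 2) k →ₐ[k] NodeRing k := Ideal.Quotient.mkₐ k _

/-- The coordinate `x` of `k[x,y]/(xy)`. -/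
def x : NodeRing k := mk k (X 0)

/-- The coordinate `y` of `k[x,y]/(xy)`. -/
def y : NodeRing k := mk k (X 1)

/-- The ideal `(x, y)` of the singular point of the node `xy = 0`. -/
abbrev originIdeal : Ideal (NodeRing k) := Ideal.span {x k, y k}

/-- The coordinate `x` as an element of the module `(x, y)`. -/
def originX : originIdeal k := ⟨x k, Ideal.subset_span (Set.mem_insert _ _)⟩

/-- The coordinate `y` as an element of the module `(x, y)`. -/
def originY : originIdeal k := ⟨y k, Ideal.subset_span (Set.mem_insert_of_mem _ rfl)⟩

theorem x_mul_y : x k * y k = 0 :=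
  Ideal.Quotient.eq_zero_iff_mem.2 (Ideal.mem_span_singleton_self _)

theorem adjoin_x_y : Algebra.adjoin k {x k, y k} = ⊤ := by
  have hrange : {x k, y k} = Set.range fun i ↦ mk k (X i) := by
    ext; simp [x, y, Fin.exists_fin_two, eq_comm]
  rw [hrange, Algebra.adjoin_range_eq_range_aeval, ← comp_aeval, aeval_X_left, AlgHom.comp_id]
  exact (AlgHom.range_eq_top _).2 (Ideal.Quotient.mkₐ_surjective _ _)

/-- Restriction of functions from the node `xy = 0` to its two axes: `x ↦ (t, 0)` and
`y ↦ (0, t)`. -/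
def toAxes : NodeRing k →ₐ[k] k[X] × k[X] :=
  Ideal.Quotient.liftₐ _ (aeval ![(Polynomial.X, 0), (0, Polynomial.X)]) fun p hp ↦ by
    obtain ⟨q, rfl⟩ := Ideal.mem_span_singleton'.1 hp
    simp [← Prod.zero_eq_mk]

instance : Algebra (NodeRing k) (k[X] × k[X]) := (toAxes k).toAlgebra

theorem toAxes_x : toAxes k (x k) = (Polynomial.X, 0) :=
  aeval_X ![(Polynomial.X, 0), (0, Polynomial.X)] 0

theorem toAxes_y : toAxes k (y k) = (0, Polynomial.X) :=
  aeval_X ![(Polynomial.X, 0), (0, Polynomial.X)] 1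

theorem smul_originX (a : NodeRing k) :
    a • originX k = Polynomial.aeval (x k) (toAxes k a).1 • originX k :=
  Subtype.ext <| mul_eq_aeval_mul_of_adjoin_eq_top (π := (AlgHom.fst k _ _).comp (toAxes k))
    (adjoin_x_y k) (x_mul_y k) (congrArg Prod.fst (toAxes_x k)) (congrArg Prod.fst (toAxes_y k)) a

theorem smul_originY (a : NodeRing k) :
    a • originY k = Polynomial.aeval (y k) (toAxes k a).2 • originY k :=
  Subtype.ext <| mul_eq_aeval_mul_of_adjoin_eq_top (π := (AlgHom.snd k _ _).comp (toAxes k))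
    (Set.pair_comm (x k) (y k) ▸ adjoin_x_y k) (mul_comm (x k) (y k) ▸ x_mul_y k)
    (congrArg Prod.snd (toAxes_y k)) (congrArg Prod.snd (toAxes_x k)) a

/-- The map `(f, g) ↦ x f(x) + y g(y)`. -/
def axesToOrigin : k[X] × k[X] →ₗ[NodeRing k] originIdeal k where
  toFun p := Polynomial.aeval (x k) p.1 • originX k + Polynomial.aeval (y k) p.2 • originY k
  map_add' p q := by
    simp only [Prod.fst_add, Prod.snd_add, map_add, add_smul]
    abel
  map_smul' a p := by
    have hsmul : a • p = toAxes k a * p := rfl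
    rw [hsmul, Prod.fst_mul, Prod.snd_mul, map_mul, map_mul, RingHom.id_apply, smul_add,
      smul_comm a, smul_originX k a, smul_comm a, smul_originY k a, smul_smul, smul_smul,
      mul_comm (Polynomial.aeval (x k) p.1), mul_comm (Polynomial.aeval (y k) p.2)]

theorem axesToOrigin_apply (p : k[X] × k[X]) : axesToOrigin k p =
    Polynomial.aeval (x k) p.1 • originX k + Polynomial.aeval (y k) p.2 • originY k :=
  rfl

theorem toAxes_axesToOrigin (p : k[X] × k[X]) :
    toAxes k (axesToOrigin k p) = (Polynomial.X, Polynomial.X) * p := by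
  have hx : toAxes k (Polynomial.aeval (x k) p.1 * x k) = (Polynomial.X * p.1, 0) := by
    rw [map_mul, ← Polynomial.aeval_algHom_apply, toAxes_x, Polynomial.aeval_prod_apply,
      Polynomial.aeval_X_left_apply, Prod.mk_mul_mk, mul_zero, mul_comm]
  have hy : toAxes k (Polynomial.aeval (y k) p.2 * y k) = (0, Polynomial.X * p.2) := by
    rw [map_mul, ← Polynomial.aeval_algHom_apply, toAxes_y, Polynomial.aeval_prod_apply,
      Polynomial.aeval_X_left_apply, Prod.mk_mul_mk, mul_zero, mul_comm]
  calc toAxes k (axesToOrigin k p)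
      = toAxes k (Polynomial.aeval (x k) p.1 * x k + Polynomial.aeval (y k) p.2 * y k) := rfl
    _ = (Polynomial.X, Polynomial.X) * p := by
      rw [map_add, hx, hy, Prod.mk_add_mk, add_zero, zero_add]; rfl

theorem isLeftRegular_X_X : IsLeftRegular ((Polynomial.X, Polynomial.X) : k[X] × k[X]) :=
  .prodMk Polynomial.monic_X.isRegular.left Polynomial.monic_X.isRegular.left

theorem X_X_mul_mem_range (p : k[X] × k[X]) :
    (Polynomial.X, Polynomial.X) * p ∈ Set.range (algebraMap (NodeRing k) (k[X] × k[X])) :=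
  ⟨axesToOrigin k p, toAxes_axesToOrigin k p⟩

theorem axesToOrigin_bijective : Function.Bijective (axesToOrigin k) := by
  refine ⟨fun p q hpq ↦ isLeftRegular_X_X k ?_, fun ⟨m, hm⟩ ↦ ?_⟩
  · simp only [← toAxes_axesToOrigin, hpq]
  · obtain ⟨a, b, rfl⟩ := Ideal.mem_span_pair.1 hm
    refine ⟨((toAxes k a).1, (toAxes k b).2), ?_⟩
    rw [axesToOrigin_apply, ← smul_originX, ← smul_originY]
    rfl

/-- The isomorphism of `(x, y)` with the functions on the two axes. -/
def axesEquivOrigin : (k[X] × k[X]) ≃ₗ[NodeRing k] originIdeal k :=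
  LinearEquiv.ofBijective (axesToOrigin k) (axesToOrigin_bijective k)

theorem axesEquivOrigin_C_C (a b : k) :
    axesEquivOrigin k (Polynomial.C a, Polynomial.C b) = a • originX k + b • originY k := by
  change axesToOrigin k (Polynomial.C a, Polynomial.C b) = _
  rw [axesToOrigin_apply, Polynomial.aeval_C, Polynomial.aeval_C, algebraMap_smul, algebraMap_smul]

variable {k} in
theorem originIdeal_hom_ext {N : Type*} [AddCommMonoid N] [Module (NodeRing k) N]
    {F G : originIdeal k →ₗ[NodeRing k] N} (hx : F (originX k) = G (originX k))
    (hy : F (originY k) = G (originY k)) : F = G := by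
  ext1 m
  obtain ⟨p, rfl⟩ := (axesToOrigin_bijective k).surjective m
  simp only [axesToOrigin_apply, map_add, map_smul, hx, hy]

variable [IsReduced k]

/-- The automorphism `x ↦ λx`, `y ↦ μy` of the module `(x, y)`, as a function of `(λ, μ)`. -/
def scalingEquiv : kˣ × kˣ ≃* (originIdeal k ≃ₗ[NodeRing k] originIdeal k) :=
  let unitsEquiv := MulEquiv.ofBijective _ (units_map_polynomialC_bijective k)
  ((unitsEquiv.prodCongr unitsEquiv).trans MulEquiv.prodUnits.symm).trans <|
    unitsEquivAut (isLeftRegular_X_X k) (X_X_mul_mem_range k) (axesEquivOrigin k)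

theorem scalingEquiv_smul_add_smul (u : kˣ × kˣ) (a b : k) :
    scalingEquiv k u (a • originX k + b • originY k) =
      ((u.1 : k) * a) • originX k + ((u.2 : k) * b) • originY k := by
  rw [← axesEquivOrigin_C_C, ← axesEquivOrigin_C_C, Polynomial.C_mul, Polynomial.C_mul]
  exact unitsEquivAut_apply_apply (isLeftRegular_X_X k) (X_X_mul_mem_range k) _ _ _

theorem scalingEquiv_originX (u : kˣ × kˣ) :
    scalingEquiv k u (originX k) = (u.1 : k) • originX k := by
  simpa using scalingEquiv_smul_add_smul k u 1 0

theorem scalingEquiv_originY (u : kˣ × kˣ) :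
    scalingEquiv k u (originY k) = (u.2 : k) • originY k := by
  simpa using scalingEquiv_smul_add_smul k u 0 1

variable {k} in
theorem scalingEquiv_eq_iff {u : kˣ × kˣ} {F : originIdeal k ≃ₗ[NodeRing k] originIdeal k} :
    scalingEquiv k u = F ↔
      (F (originX k) : NodeRing k) = (u.1 : k) • x k ∧
        (F (originY k) : NodeRing k) = (u.2 : k) • y k := by
  refine ⟨?_, fun ⟨hx, hy⟩ ↦ LinearEquiv.toLinearMap_injective (originIdeal_hom_ext ?_ ?_)⟩
  · rintro rfl
    exact ⟨congrArg Subtype.val (scalingEquiv_originX k u),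
      congrArg Subtype.val (scalingEquiv_originY k u)⟩
  · exact (scalingEquiv_originX k u).trans (Subtype.ext hx.symm)
  · exact (scalingEquiv_originY k u).trans (Subtype.ext hy.symm)

end NodeRing

open NodeRing in
theorem stmt_4_general (k : Type*) [CommRing k] [IsReduced k] :
    (∀ F : originIdeal k ≃ₗ[NodeRing k] originIdeal k, ∃! lm : kˣ × kˣ,
      (F (originX k) : NodeRing k) = (lm.1 : k) • x k ∧
        (F (originY k) : NodeRing k) = (lm.2 : k) • y k) ∧
    Nonempty ((originIdeal k ≃ₗ[NodeRing k] originIdeal k) ≃* (kˣ × kˣ)) := by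
  refine ⟨fun F ↦ ?_, ⟨(scalingEquiv k).symm⟩⟩
  simpa only [← scalingEquiv_eq_iff] using (scalingEquiv k).bijective.existsUnique F

/-- With `A = k[x,y]/(xy)` and `M = (x,y) ⊆ A` viewed as an `A`-module, every
`A`-module automorphism of `M` is of the form `x ↦ λx`, `y ↦ μy` for uniquely determined
`λ, μ ∈ kˣ`; in particular the `A`-module automorphism group of `M` is isomorphic to
`kˣ × kˣ`. -/
theorem stmt_4 (k : Type) [Field k] :
    (∀ F : Mxy k ≃ₗ[Axy k] Mxy k, ∃! lm : kˣ × kˣ,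
      ((F (xel k) : Axy k) = (lm.1 : k) • xbar k ∧
       (F (yel k) : Axy k) = (lm.2 : k) • ybar k)) ∧
    Nonempty ((Mxy k ≃ₗ[Axy k] Mxy k) ≃* (kˣ × kˣ)) :=
  stmt_4_general k

end
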